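/- arXiv:2203.01258 — 2 statements merged into one kernel-verified Lean document; each statement's English description precedes it below -/
import Mathlib

section
/- The codimension three Gorenstein sequences of order two (i.e., with T_2 < 6, equivalently T_2 ∈ {4,5}) are exactly, besides those with Sperner number at most six: T = (1,3,4,5,…,s−1,s^k,s−1,…,3,1), T = (1,3,5,6,…,s−1,s^k,s−1,…,3,1), and T = (1,3,5,7,…,2t+1,2t+2,2t+3,…,s^k,…,3,1), where s ≥ 7 and k ≥ 1. -/
/- Common background: standard graded Artinian (Gorenstein) quotients of a
polynomial ring, their graded pieces, Hilbert function, socle degree,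
Lefschetz-type conditions, and Macaulay contraction duality. -/

noncomputable section
open MvPolynomial
open scoped Classical

variable {K : Type*} [Field K] {n : ℕ}

/-- The degree-`i` graded component of `R/I`: the image in the quotient of the
homogeneous polynomials of degree `i`. -/
def gradedPiece (I : Ideal (MvPolynomial (Fin n) K)) (i : ℕ) :
    Submodule K (MvPolynomial (Fin n) K ⧸ I) :=
  (homogeneousSubmodule (Fin n) K i).map (Ideal.Quotient.mkₐ K I).toLinearMap

/-- The Hilbert function of `R/I`. -/
def hilbFn (I : Ideal (MvPolynomial (Fin n) K)) (i : ℕ) : ℕ :=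
  Module.finrank K (gradedPiece I i)

/-- `I` is a homogeneous ideal. -/
def IsHomogIdeal (I : Ideal (MvPolynomial (Fin n) K)) : Prop :=
  ∀ p ∈ I, ∀ i, homogeneousComponent i p ∈ I

/-- The socle of `R/I`: elements killed by every variable. -/
def socleSub (I : Ideal (MvPolynomial (Fin n) K)) :
    Submodule K (MvPolynomial (Fin n) K ⧸ I) :=
  ⨅ v : Fin n, LinearMap.ker (LinearMap.mulLeft K (Ideal.Quotient.mk I (X v)))

/-- `R/I` is a standard graded Artinian Gorenstein algebra. -/
def IsAG (I : Ideal (MvPolynomial (Fin n) K)) : Prop :=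
  IsHomogIdeal I ∧ I ≠ ⊤ ∧ FiniteDimensional K (MvPolynomial (Fin n) K ⧸ I) ∧
    Module.finrank K (socleSub I) = 1

/-- The socle degree: the top degree with nonzero component. -/
def socDeg (I : Ideal (MvPolynomial (Fin n) K)) : ℕ :=
  sSup {i | hilbFn I i ≠ 0}

/-- Multiplication by `ℓ ^ d` maps `A_u` bijectively onto `A_v`. -/
def PowMulBij (I : Ideal (MvPolynomial (Fin n) K)) (ℓ : MvPolynomial (Fin n) K ⧸ I)
    (d u v : ℕ) : Prop :=
  (∀ a ∈ gradedPiece I u, ℓ ^ d * a = 0 → a = 0) ∧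
  (∀ b ∈ gradedPiece I v, ∃ a ∈ gradedPiece I u, ℓ ^ d * a = b)

/-- `(A, ℓ)` is a strong Lefschetz pair: `ℓ^(j-2i) : A_i → A_(j-i)` is bijective
for all `0 ≤ i ≤ ⌊j/2⌋`, `j` the socle degree. -/
def SLPair (I : Ideal (MvPolynomial (Fin n) K)) (ℓ : MvPolynomial (Fin n) K ⧸ I) : Prop :=
  ∀ i, 2 * i ≤ socDeg I → PowMulBij I ℓ (socDeg I - 2 * i) i (socDeg I - i)

/-- `A = R/I` has the strong Lefschetz property. -/
def StrongLefschetz (I : Ideal (MvPolynomial (Fin n) K)) : Prop :=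
  ∃ ℓ ∈ gradedPiece I 1, SLPair I ℓ

/-- Contraction of `F` by the monomial `x^d`. -/
def contractMon (d : Fin n →₀ ℕ) (F : MvPolynomial (Fin n) K) : MvPolynomial (Fin n) K :=
  ∑ e ∈ F.support, if d ≤ e then monomial (e - d) (coeff e F) else 0

/-- Contraction action of a polynomial `p` on `F` (Macaulay duality pairing). -/
def contract (p F : MvPolynomial (Fin n) K) : MvPolynomial (Fin n) K :=
  ∑ d ∈ p.support, coeff d p • contractMon d F

/-- The symmetric sequence of socle degree `j` built from the first-half difference
list `δ`: `T i = δ_0 + ⋯ + δ_{min(i, j-i)}` for `i ≤ j`, and `0` beyond. -/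
def symSeq (δ : List ℕ) (j : ℕ) : ℕ → ℕ :=
  fun i => if i ≤ j then (δ.take (min i (j - i) + 1)).sum else 0

/-- The sequence `(1,3,4,5,…,s-1,s^k,s-1,…,4,3,1)` (difference vector `(1,2,1^{s-3})`). -/
def famA (s k : ℕ) : ℕ → ℕ := symSeq ([1, 2] ++ List.replicate (s - 3) 1) (k + 2 * s - 5)

/-- The sequence `(1,3,5,6,…,s-1,s^k,s-1,…,6,5,3,1)` (difference vector `(1,2,2,1^{s-5})`). -/
def famB (s k : ℕ) : ℕ → ℕ := symSeq ([1, 2, 2] ++ List.replicate (s - 5) 1) (k + 2 * s - 7)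

/-- The sequence `(1,3,5,7,…,2t+1,2t+2,…,s^k,…,3,1)` (difference vector
`(1,2^t,1^{s-2t-1})`). -/
def famC (t s k : ℕ) : ℕ → ℕ :=
  symSeq ([1] ++ List.replicate t 2 ++ List.replicate (s - 2 * t - 1) 1)
    (k + 2 * s - 2 * t - 3)

section GradedQuotient

variable {I : Ideal (MvPolynomial (Fin n) K)}

theorem mk_mem_gradedPiece {p : MvPolynomial (Fin n) K} {i : ℕ} (hp : p.IsHomogeneous i) :
    Ideal.Quotient.mk I p ∈ gradedPiece I i :=
  ⟨p, hp, rfl⟩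

theorem mem_gradedPiece_iff {a : MvPolynomial (Fin n) K ⧸ I} {i : ℕ} :
    a ∈ gradedPiece I i ↔ ∃ p, p.IsHomogeneous i ∧ Ideal.Quotient.mk I p = a :=
  Iff.rfl

theorem mul_mem_gradedPiece {a b : MvPolynomial (Fin n) K ⧸ I} {i j : ℕ}
    (ha : a ∈ gradedPiece I i) (hb : b ∈ gradedPiece I j) : a * b ∈ gradedPiece I (i + j) := by
  obtain ⟨p, hp, rfl⟩ := mem_gradedPiece_iff.1 ha
  obtain ⟨q, hq, rfl⟩ := mem_gradedPiece_iff.1 hb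
  exact mem_gradedPiece_iff.2 ⟨p * q, hp.mul hq, map_mul _ _ _⟩

theorem one_mem_gradedPiece : (1 : MvPolynomial (Fin n) K ⧸ I) ∈ gradedPiece I 0 :=
  mem_gradedPiece_iff.2 ⟨1, isHomogeneous_one _ _, map_one _⟩

theorem mk_X_mem_gradedPiece (v : Fin n) :
    Ideal.Quotient.mk I (X v) ∈ gradedPiece I 1 :=
  mk_mem_gradedPiece (isHomogeneous_X _ _)

/-- A subspace containing the products of the variables with a graded piece contains the next
graded piece. -/
theorem gradedPiece_succ_le {S : Submodule K (MvPolynomial (Fin n) K ⧸ I)} {i : ℕ}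
    (h : ∀ v, ∀ a ∈ gradedPiece I i, Ideal.Quotient.mk I (X v) * a ∈ S) :
    gradedPiece I (i + 1) ≤ S := by
  rintro _ ⟨p, hp, rfl⟩
  have hp' : p.IsHomogeneous (i + 1) := hp
  change Ideal.Quotient.mkₐ K I p ∈ S
  rw [p.as_sum, map_sum]
  refine S.sum_mem fun e he => ?_
  have hdeg : e.degree = i + 1 := by
    by_contra hne
    exact (mem_support_iff.1 he) (hp'.coeff_eq_zero hne)
  have hne : e ≠ 0 := by
    rintro rfl
    simp at hdeg
  obtain ⟨v, hv⟩ := Finsupp.ne_iff.1 hne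
  have hle : Finsupp.single v 1 ≤ e := by
    rw [Finsupp.single_le_iff]
    exact Nat.one_le_iff_ne_zero.2 hv
  have hsplit : monomial e (coeff e p) =
      X v * monomial (e - Finsupp.single v 1) (coeff e p) := by
    rw [X, monomial_mul, one_mul, add_tsub_cancel_of_le hle]
  have hd : (e - Finsupp.single v 1).degree = i := by
    have := congrArg Finsupp.degree (add_tsub_cancel_of_le hle)
    rw [map_add, Finsupp.degree_single, hdeg] at this
    omega
  rw [hsplit, map_mul]
  exact h v _ (mk_mem_gradedPiece (isHomogeneous_monomial _ hd))

theorem gradedPiece_disjoint (hI : IsHomogIdeal I) {i j : ℕ} (hij : i ≠ j)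
    {a : MvPolynomial (Fin n) K ⧸ I} (hi : a ∈ gradedPiece I i) (hj : a ∈ gradedPiece I j) :
    a = 0 := by
  obtain ⟨p, hp, rfl⟩ := mem_gradedPiece_iff.1 hi
  obtain ⟨q, hq, hpq⟩ := mem_gradedPiece_iff.1 hj
  have h := hI _ (Ideal.Quotient.eq.1 hpq.symm) i
  rw [map_sub, homogeneousComponent_of_mem hp, homogeneousComponent_of_mem hq,
    if_pos rfl, if_neg hij, sub_zero] at h
  exact Ideal.Quotient.eq_zero_iff_mem.2 h

theorem finite_setOf_gradedPiece_ne_bot (hI : IsHomogIdeal I)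
    [FiniteDimensional K (MvPolynomial (Fin n) K ⧸ I)] :
    {i | gradedPiece I i ≠ ⊥}.Finite := by
  have hex : ∀ i : {i | gradedPiece I i ≠ ⊥}, ∃ p : MvPolynomial (Fin n) K,
      p.IsHomogeneous i ∧ Ideal.Quotient.mk I p ≠ 0 := by
    rintro ⟨i, hi⟩
    obtain ⟨a, ha, ha0⟩ := (Submodule.ne_bot_iff _).1 hi
    obtain ⟨p, hp, rfl⟩ := mem_gradedPiece_iff.1 ha
    exact ⟨p, hp, ha0⟩
  choose p hp hp0 using hex
  have hli : LinearIndependent K fun i => Ideal.Quotient.mkₐ K I (p i) := by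
    rw [linearIndependent_iff']
    intro s g hg i hi
    have hmem : ∑ k ∈ s, g k • p k ∈ I := by
      rw [← Ideal.Quotient.eq_zero_iff_mem, ← Ideal.Quotient.mkₐ_eq_mk K, map_sum]
      simpa only [map_smul] using hg
    have hc := hI _ hmem i
    rw [map_sum, Finset.sum_eq_single i] at hc
    · rw [map_smul, homogeneousComponent_of_mem (hp i), if_pos rfl] at hc
      by_contra hgi
      apply hp0 i
      rw [Ideal.Quotient.eq_zero_iff_mem]
      have := I.mul_mem_left (C (g i)⁻¹) hc
      rwa [← smul_eq_C_mul, smul_smul, inv_mul_cancel₀ hgi, one_smul] at this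
    · intro k _ hki
      rw [map_smul, homogeneousComponent_of_mem (hp k), if_neg, smul_zero]
      exact fun h => hki (Subtype.ext h.symm)
    · exact fun h => absurd hi h
  have := hli.finite
  exact Set.toFinite _

end GradedQuotient
section LinearAlgebra

variable {V W V' W' : Type*} [AddCommGroup V] [Module K V] [AddCommGroup W] [Module K W]
  [AddCommGroup V'] [Module K V'] [AddCommGroup W'] [Module K W']

theorem finrank_range_flip [FiniteDimensional K V] [FiniteDimensional K W]
    (B : V →ₗ[K] W →ₗ[K] K) :
    Module.finrank K (LinearMap.range B.flip) = Module.finrank K (LinearMap.range B) := by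
  have key : LinearMap.range B ≤ LinearMap.range B.flip.dualMap := by
    rintro _ ⟨v, rfl⟩
    exact ⟨Module.Dual.eval K V v, by ext w; rfl⟩
  have key' : LinearMap.range B.flip ≤ LinearMap.range B.dualMap := by
    rintro _ ⟨w, rfl⟩
    exact ⟨Module.Dual.eval K W w, by ext v; rfl⟩
  refine le_antisymm ?_ ?_
  · rw [← LinearMap.finrank_range_dualMap_eq_finrank_range B]
    exact Submodule.finrank_mono key'
  · rw [← LinearMap.finrank_range_dualMap_eq_finrank_range B.flip]
    exact Submodule.finrank_mono key

theorem finrank_range_eq_of_ker_eq [FiniteDimensional K V]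
    {f : V →ₗ[K] V'} {g : V →ₗ[K] W'} (h : LinearMap.ker f = LinearMap.ker g) :
    Module.finrank K (LinearMap.range f) = Module.finrank K (LinearMap.range g) := by
  have h₁ := f.finrank_range_add_finrank_ker
  have h₂ := g.finrank_range_add_finrank_ker
  rw [h] at h₁
  omega

/-- If `M` covers `T` modulo `U`, the part of `M` that is sent into `U` has dimension at most
`dim M + dim U - dim T`. -/
theorem finrank_add_finrank_le_of_le_sup [FiniteDimensional K V']
    {f : V' →ₗ[K] V'} {N M U T : Submodule K V'}
    (hNM : N ≤ M) (hNU : ∀ a ∈ N, f a ∈ U) (hT : T ≤ U ⊔ M.map f) :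
    Module.finrank K T + Module.finrank K N ≤ Module.finrank K M + Module.finrank K U := by
  let g : M →ₗ[K] V' ⧸ U := U.mkQ ∘ₗ f ∘ₗ M.subtype
  have hg := g.finrank_range_add_finrank_ker
  have hN : Module.finrank K N ≤ Module.finrank K (LinearMap.ker g) := by
    rw [← (Submodule.comapSubtypeEquivOfLe hNM).finrank_eq]
    refine Submodule.finrank_mono fun a ha => ?_
    exact (Submodule.Quotient.mk_eq_zero U).2 (hNU a ha)
  have hr : LinearMap.range g = (M.map f).map U.mkQ := by
    rw [LinearMap.range_comp, LinearMap.range_comp, Submodule.range_subtype]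
  have hT' : Module.finrank K T ≤ Module.finrank K U + Module.finrank K (LinearMap.range g) := by
    let q : T →ₗ[K] V' ⧸ U := U.mkQ ∘ₗ T.subtype
    have hq := q.finrank_range_add_finrank_ker
    have h₁ : Module.finrank K (LinearMap.range q) ≤ Module.finrank K (LinearMap.range g) := by
      refine Submodule.finrank_mono ?_
      rw [hr, LinearMap.range_comp, Submodule.range_subtype]
      refine (Submodule.map_mono hT).trans ?_
      rw [Submodule.map_sup, Submodule.mkQ_map_self, bot_sup_eq]
    have h₂ : Module.finrank K (LinearMap.ker q) ≤ Module.finrank K U := by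
      rw [← LinearMap.finrank_range_of_inj (f := T.subtype ∘ₗ (LinearMap.ker q).subtype)
        (T.injective_subtype.comp (Submodule.injective_subtype _))]
      refine Submodule.finrank_mono ?_
      rintro _ ⟨a, rfl⟩
      exact (Submodule.Quotient.mk_eq_zero U).1 a.2
    omega
  omega

end LinearAlgebra

section Duality

variable {I : Ideal (MvPolynomial (Fin n) K)}

theorem mem_socleSub {a : MvPolynomial (Fin n) K ⧸ I} :
    a ∈ socleSub I ↔ ∀ v, Ideal.Quotient.mk I (X v) * a = 0 := by
  simp [socleSub, Submodule.mem_iInf]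

/-- The Macaulay duality pairing of a graded Artinian Gorenstein algebra. -/
theorem IsAG.exists_pairing (hI : IsAG I) :
    ∃ j, gradedPiece I j ≠ ⊥ ∧ (∀ d, j < d → gradedPiece I d = ⊥) ∧
      Module.finrank K (gradedPiece I j) = 1 ∧
      ∃ f : (MvPolynomial (Fin n) K ⧸ I) →ₗ[K] K, ∀ i a, a ∈ gradedPiece I i → a ≠ 0 →
        i ≤ j ∧ ∃ b ∈ gradedPiece I (j - i), f (a * b) ≠ 0 := by
  obtain ⟨hhom, htop, hfd, hsoc⟩ := hI
  have hone : (1 : MvPolynomial (Fin n) K ⧸ I) ≠ 0 := by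
    rw [← map_one (Ideal.Quotient.mk I), Ne, Ideal.Quotient.eq_zero_iff_mem]
    exact fun h => htop ((Ideal.eq_top_iff_one I).2 h)
  have hfin := finite_setOf_gradedPiece_ne_bot hhom
  have hne : {i | gradedPiece I i ≠ ⊥}.Nonempty :=
    ⟨0, (Submodule.ne_bot_iff _).2 ⟨1, one_mem_gradedPiece, hone⟩⟩
  obtain ⟨j, hj, hmax⟩ := Set.exists_max_image _ id hfin hne
  have hzero : ∀ d, j < d → gradedPiece I d = ⊥ := by
    intro d hd
    by_contra h
    exact absurd (hmax d h) (not_le.2 hd)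
  have hle : gradedPiece I j ≤ socleSub I := by
    intro a ha
    rw [mem_socleSub]
    intro v
    have := mul_mem_gradedPiece ha (mk_X_mem_gradedPiece v)
    rw [hzero (j + 1) (Nat.lt_succ_self j), Submodule.mem_bot] at this
    rw [mul_comm, this]
  have hpos : 1 ≤ Module.finrank K (gradedPiece I j) :=
    Nat.one_le_iff_ne_zero.2 fun h => hj (Submodule.finrank_eq_zero.1 h)
  have heq : gradedPiece I j = socleSub I :=
    Submodule.eq_of_le_of_finrank_le hle (hsoc.le.trans hpos)
  have hone' : Module.finrank K (gradedPiece I j) = 1 := heq ▸ hsoc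
  obtain ⟨w, hw0, hw⟩ := finrank_eq_one_iff'.1 hone'
  have hw0' : (w : MvPolynomial (Fin n) K ⧸ I) ≠ 0 := fun h => hw0 (Subtype.ext h)
  obtain ⟨f, hf⟩ : ∃ f : Module.Dual K (MvPolynomial (Fin n) K ⧸ I), f w ≠ 0 := by
    by_contra! h
    exact hw0' ((Module.forall_dual_apply_eq_zero_iff K _).1 h)
  refine ⟨j, hj, hzero, hone', f, fun i a ha ha0 => ?_⟩
  let P : ℕ → Prop := fun d => ∃ b ∈ gradedPiece I d, a * b ≠ 0
  have hP0 : P 0 := ⟨1, one_mem_gradedPiece, by rwa [mul_one]⟩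
  have hPle : ∀ d, P d → d ≤ j := by
    rintro d ⟨b, hb, hab⟩
    by_contra hd
    rw [hzero d (not_le.1 hd), Submodule.mem_bot] at hb
    exact hab (by rw [hb, mul_zero])
  have hPd : P (Nat.findGreatest P j) := Nat.findGreatest_spec (Nat.zero_le j) hP0
  generalize hdd : Nat.findGreatest P j = d at hPd
  have hPsucc : ¬ P (d + 1) := by
    intro h
    have := Nat.le_findGreatest (hPle _ h) h
    omega
  obtain ⟨b, hb, hab⟩ := hPd
  have habs : a * b ∈ gradedPiece I j := by
    rw [heq, mem_socleSub]
    intro v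
    by_contra hv
    refine hPsucc ⟨b * Ideal.Quotient.mk I (X v),
      mul_mem_gradedPiece hb (mk_X_mem_gradedPiece v), ?_⟩
    rwa [← mul_assoc, mul_comm]
  have hdeg : i + d = j := by
    by_contra h
    exact hab (gradedPiece_disjoint hhom h (mul_mem_gradedPiece ha hb) habs)
  refine ⟨by omega, b, by rwa [← hdeg, Nat.add_sub_cancel_left], ?_⟩
  obtain ⟨c, hc⟩ := hw ⟨a * b, habs⟩
  have hc' : a * b = c • (w : MvPolynomial (Fin n) K ⧸ I) := (congrArg Subtype.val hc).symm
  rw [hc', map_smul, smul_eq_mul]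
  refine mul_ne_zero (fun h => hab ?_) hf
  rw [hc', h, zero_smul]

/-- Multiplication by a homogeneous element and its transpose under the duality pairing have the
same rank. -/
theorem finrank_map_mulLeft_eq [FiniteDimensional K (MvPolynomial (Fin n) K ⧸ I)] {j : ℕ}
    {f : (MvPolynomial (Fin n) K ⧸ I) →ₗ[K] K}
    (hf : ∀ i a, a ∈ gradedPiece I i → a ≠ 0 →
        i ≤ j ∧ ∃ b ∈ gradedPiece I (j - i), f (a * b) ≠ 0)
    {g : MvPolynomial (Fin n) K ⧸ I} {d i e : ℕ} (hg : g ∈ gradedPiece I d) (h : i + d + e = j) :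
    Module.finrank K ((gradedPiece I i).map (LinearMap.mulLeft K g)) =
      Module.finrank K ((gradedPiece I e).map (LinearMap.mulLeft K g)) := by
  let B : gradedPiece I i →ₗ[K] gradedPiece I e →ₗ[K] K :=
    ((LinearMap.mul K (MvPolynomial (Fin n) K ⧸ I)).compr₂
      (f ∘ₗ LinearMap.mulLeft K g)).domRestrict₁₂ (gradedPiece I i) (gradedPiece I e)
  have hB : ∀ a b, B a b = f (g * (a * b)) := fun a b => rfl
  have key : ∀ a b, a + d + b = j → ∀ x : gradedPiece I a,
      g * x = 0 ↔ ∀ y : gradedPiece I b, f (g * (x * y)) = 0 := by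
    intro a b hab x
    refine ⟨fun hx y => by rw [← mul_assoc, hx, zero_mul, map_zero], fun hx => ?_⟩
    by_contra hne
    obtain ⟨-, y, hy, hxy⟩ := hf _ _ (mul_mem_gradedPiece hg x.2) hne
    rw [show j - (d + a) = b by omega] at hy
    exact hxy (by rw [mul_assoc]; exact hx ⟨y, hy⟩)
  have h₁ : LinearMap.ker (LinearMap.mulLeft K g ∘ₗ (gradedPiece I i).subtype) =
      LinearMap.ker B := by
    ext x
    simp only [LinearMap.mem_ker, LinearMap.ext_iff, hB, LinearMap.zero_apply]
    exact key i e h x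
  have h₂ : LinearMap.ker (LinearMap.mulLeft K g ∘ₗ (gradedPiece I e).subtype) =
      LinearMap.ker B.flip := by
    ext x
    simp only [LinearMap.mem_ker, LinearMap.ext_iff, hB, LinearMap.zero_apply,
      LinearMap.flip_apply]
    refine (key e i (by omega) x).trans (forall_congr' fun y => ?_)
    rw [mul_comm (x : MvPolynomial (Fin n) K ⧸ I)]
  have e₁ := finrank_range_eq_of_ker_eq h₁
  have e₂ := finrank_range_eq_of_ker_eq h₂
  rw [LinearMap.range_comp, Submodule.range_subtype] at e₁ e₂
  rw [e₁, e₂, finrank_range_flip]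

theorem hilbFn_symm [FiniteDimensional K (MvPolynomial (Fin n) K ⧸ I)] {j : ℕ}
    {f : (MvPolynomial (Fin n) K ⧸ I) →ₗ[K] K}
    (hf : ∀ i a, a ∈ gradedPiece I i → a ≠ 0 →
        i ≤ j ∧ ∃ b ∈ gradedPiece I (j - i), f (a * b) ≠ 0)
    {i e : ℕ} (h : i + e = j) : hilbFn I i = hilbFn I e := by
  have := finrank_map_mulLeft_eq hf (one_mem_gradedPiece (I := I)) (i := i) (e := e) (by omega)
  rwa [LinearMap.mulLeft_one, Submodule.map_id, Submodule.map_id] at this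

theorem hilbFn_zero (hI : I ≠ ⊤) : hilbFn I 0 = 1 := by
  have h1 : (1 : MvPolynomial (Fin n) K ⧸ I) ≠ 0 := by
    rw [← map_one (Ideal.Quotient.mk I), Ne, Ideal.Quotient.eq_zero_iff_mem]
    exact fun h => hI ((Ideal.eq_top_iff_one I).2 h)
  have : gradedPiece I 0 = K ∙ (1 : MvPolynomial (Fin n) K ⧸ I) := by
    rw [gradedPiece, homogeneousSubmodule_zero, Submodule.map_one, Submodule.one_eq_span]
  rw [hilbFn, this, finrank_span_singleton h1]

/-- If the degree-two piece is `ℓ A₁ + m A₁`, the Hilbert function is concave up to the socle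
degree. -/
theorem hilbFn_concave [FiniteDimensional K (MvPolynomial (Fin n) K ⧸ I)] {j : ℕ}
    {f : (MvPolynomial (Fin n) K ⧸ I) →ₗ[K] K}
    (hf : ∀ i a, a ∈ gradedPiece I i → a ≠ 0 →
        i ≤ j ∧ ∃ b ∈ gradedPiece I (j - i), f (a * b) ≠ 0)
    {l m : MvPolynomial (Fin n) K ⧸ I} (hl : l ∈ gradedPiece I 1) (hm : m ∈ gradedPiece I 1)
    (h2 : gradedPiece I 2 ≤ (gradedPiece I 1).map (LinearMap.mulLeft K l) ⊔
      (gradedPiece I 1).map (LinearMap.mulLeft K m)) {i : ℕ} (hi : i + 2 ≤ j) :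
    hilbFn I (i + 2) + hilbFn I i ≤ 2 * hilbFn I (i + 1) := by
  have hgen : ∀ i, gradedPiece I (i + 2) ≤ (gradedPiece I (i + 1)).map (LinearMap.mulLeft K l) ⊔
      (gradedPiece I (i + 1)).map (LinearMap.mulLeft K m) := by
    intro i
    induction i with
    | zero => exact h2
    | succ i ih =>
      refine gradedPiece_succ_le fun v a ha => ?_
      obtain ⟨_, ⟨b, hb, rfl⟩, _, ⟨c, hc, rfl⟩, rfl⟩ := Submodule.mem_sup.1 (ih ha)
      rw [mul_add]
      refine Submodule.add_mem_sup ⟨Ideal.Quotient.mk I (X v) * b, ?_, mul_left_comm _ _ _⟩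
        ⟨Ideal.Quotient.mk I (X v) * c, ?_, mul_left_comm _ _ _⟩
      · rw [mul_comm]; exact mul_mem_gradedPiece hb (mk_X_mem_gradedPiece v)
      · rw [mul_comm]; exact mul_mem_gradedPiece hc (mk_X_mem_gradedPiece v)
  set r : ℕ → ℕ := fun i =>
    Module.finrank K ((gradedPiece I i).map (LinearMap.mulLeft K l)) with hr
  have hstep : ∀ i, hilbFn I (i + 2) + r i ≤ hilbFn I (i + 1) + r (i + 1) := by
    intro i
    refine finrank_add_finrank_le_of_le_sup (f := LinearMap.mulLeft K m) ?_ ?_ (hgen i)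
    · rintro _ ⟨a, ha, rfl⟩
      rw [add_comm i]
      exact mul_mem_gradedPiece hl ha
    · rintro _ ⟨a, ha, rfl⟩
      refine ⟨m * a, ?_, mul_left_comm _ _ _⟩
      rw [add_comm i]
      exact mul_mem_gradedPiece hm ha
  obtain ⟨e, rfl⟩ := Nat.exists_eq_add_of_le hi
  have s₁ := hstep i
  have s₂ := hstep e
  have t₁ : r i = r (e + 1) := finrank_map_mulLeft_eq hf hl (by omega)
  have t₂ : r (i + 1) = r e := finrank_map_mulLeft_eq hf hl (by omega)
  have u₁ : hilbFn I i = hilbFn I (e + 2) := hilbFn_symm hf (by omega)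
  have u₂ : hilbFn I (i + 1) = hilbFn I (e + 1) := hilbFn_symm hf (by omega)
  omega

end Duality
section Quadric

variable {A : Type*} [CommRing A] [Algebra K A]

/-- All quadratic monomials in `x`, `y`, `z` lie in the ideal of two elements of `V`, with
cofactors in `V`. -/
def QuadricsCovered (V : Submodule K A) (x y z : A) : Prop :=
  ∃ l ∈ V, ∃ m ∈ V, ∀ p, (p = x * x ∨ p = y * y ∨ p = z * z ∨ p = x * y ∨ p = x * z ∨ p = y * z) →
    p ∈ V.map (LinearMap.mulLeft K l) ⊔ V.map (LinearMap.mulLeft K m)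

theorem QuadricsCovered.swap {V : Submodule K A} {x y z : A} (h : QuadricsCovered V x y z) :
    QuadricsCovered V y x z := by
  obtain ⟨l, hl, m, hm, H⟩ := h
  refine ⟨l, hl, m, hm, fun p hp => H p ?_⟩
  rw [mul_comm y x] at hp
  tauto

theorem QuadricsCovered.rotate {V : Submodule K A} {x y z : A} (h : QuadricsCovered V x y z) :
    QuadricsCovered V y z x := by
  obtain ⟨l, hl, m, hm, H⟩ := h
  refine ⟨l, hl, m, hm, fun p hp => H p ?_⟩
  rw [mul_comm y x, mul_comm z x] at hp
  tauto

theorem mem_map_mulLeft_sup {V : Submodule K A} {l m a b : A} (ha : a ∈ V) (hb : b ∈ V) :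
    l * a + m * b ∈ V.map (LinearMap.mulLeft K l) ⊔ V.map (LinearMap.mulLeft K m) :=
  Submodule.add_mem_sup ⟨a, ha, rfl⟩ ⟨b, hb, rfl⟩

theorem quadricsCovered_of_sq {V : Submodule K A} {x y z : A} (hx : x ∈ V) (hy : y ∈ V)
    (hz : z ∈ V) {α β γ a b c : K} (hα : α ≠ 0)
    (h : α • (x * x) + β • (y * y) + γ • (z * z) + a • (x * y) + b • (x * z) + c • (y * z) = 0) :
    QuadricsCovered V x y z := by
  have hxx : x * x = y * (-α⁻¹ • (β • y + a • x + c • z)) + z * (-α⁻¹ • (γ • z + b • x)) := by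
    have : α⁻¹ • (α • (x * x) + β • (y * y) + γ • (z * z) + a • (x * y) + b • (x * z) +
        c • (y * z)) = 0 := by rw [h, smul_zero]
    have h1 : α⁻¹ • α • (x * x) = x * x := by rw [smul_smul, inv_mul_cancel₀ hα, one_smul]
    simp only [smul_add, h1] at this
    simp only [neg_smul, mul_neg, mul_smul_comm, mul_add, smul_add]
    rw [mul_comm y x, mul_comm z x]
    linear_combination this
  refine ⟨y, hy, z, hz, ?_⟩
  rintro p (rfl | rfl | rfl | rfl | rfl | rfl)
  · rw [hxx]
    exact mem_map_mulLeft_sup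
      (V.smul_mem _ (V.add_mem (V.add_mem (V.smul_mem _ hy) (V.smul_mem _ hx)) (V.smul_mem _ hz)))
      (V.smul_mem _ (V.add_mem (V.smul_mem _ hz) (V.smul_mem _ hx)))
  · simpa using mem_map_mulLeft_sup (l := y) (m := z) hy V.zero_mem
  · simpa using mem_map_mulLeft_sup (l := y) (m := z) V.zero_mem hz
  · simpa [mul_comm] using mem_map_mulLeft_sup (l := y) (m := z) hx V.zero_mem
  · simpa [mul_comm] using mem_map_mulLeft_sup (l := y) (m := z) V.zero_mem hx
  · simpa using mem_map_mulLeft_sup (l := y) (m := z) hz V.zero_mem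

theorem quadricsCovered_of_mul {V : Submodule K A} {x y z : A} (hx : x ∈ V) (hy : y ∈ V)
    (hz : z ∈ V) {a b c : K} (ha : a ≠ 0)
    (h : a • (x * y) + b • (x * z) + c • (y * z) = 0) :
    QuadricsCovered V x y z := by
  set w : A := -a⁻¹ • (b • x + c • y) with hw
  have hwV : w ∈ V := V.smul_mem _ (V.add_mem (V.smul_mem _ hx) (V.smul_mem _ hy))
  have hxy : x * y = z * w := by
    have : a⁻¹ • (a • (x * y) + b • (x * z) + c • (y * z)) = 0 := by rw [h, smul_zero]
    have h1 : a⁻¹ • a • (x * y) = x * y := by rw [smul_smul, inv_mul_cancel₀ ha, one_smul]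
    simp only [smul_add, h1] at this
    simp only [hw, neg_smul, mul_neg, mul_smul_comm, mul_add, smul_add]
    rw [mul_comm z x, mul_comm z y]
    linear_combination this
  refine ⟨x - y, V.sub_mem hx hy, z, hz, ?_⟩
  have key := fun {a b : A} => mem_map_mulLeft_sup (V := V) (l := x - y) (m := z) (a := a) (b := b)
  rintro p (rfl | rfl | rfl | rfl | rfl | rfl)
  · convert key hx hwV using 1
    linear_combination hxy
  · convert key (V.neg_mem hy) hwV using 1
    linear_combination hxy
  · convert key V.zero_mem hz using 1
    ring
  · convert key V.zero_mem hwV using 1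
    linear_combination hxy
  · convert key V.zero_mem hx using 1
    ring
  · convert key V.zero_mem hy using 1
    ring

theorem quadricsCovered_of_relation {V : Submodule K A} {x y z : A} (hx : x ∈ V) (hy : y ∈ V)
    (hz : z ∈ V) {α β γ a b c : K}
    (hne : α ≠ 0 ∨ β ≠ 0 ∨ γ ≠ 0 ∨ a ≠ 0 ∨ b ≠ 0 ∨ c ≠ 0)
    (h : α • (x * x) + β • (y * y) + γ • (z * z) + a • (x * y) + b • (x * z) + c • (y * z) = 0) :
    QuadricsCovered V x y z := by
  by_cases hα : α = 0
  swap
  · exact quadricsCovered_of_sq hx hy hz hα h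
  by_cases hβ : β = 0
  swap
  · refine (quadricsCovered_of_sq hy hx hz (β := α) (γ := γ) (a := a) (b := c) (c := b)
      hβ ?_).swap
    rw [mul_comm y x, ← h]
    abel
  by_cases hγ : γ = 0
  swap
  · refine (quadricsCovered_of_sq hz hx hy (β := α) (γ := β) (a := b) (b := c) (c := a)
      hγ ?_).rotate
    rw [mul_comm z x, mul_comm z y, ← h]
    abel
  subst hα hβ hγ
  simp only [zero_smul, zero_add] at h
  by_cases ha : a = 0
  swap
  · exact quadricsCovered_of_mul hx hy hz ha h
  by_cases hb : b = 0
  swap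
  · refine (quadricsCovered_of_mul hz hx hy (b := c) (c := a) hb ?_).rotate
    rw [mul_comm z x, mul_comm z y, ← h]
    abel
  by_cases hc : c = 0
  swap
  · refine (quadricsCovered_of_mul hy hz hx (b := a) (c := b) hc ?_).rotate.rotate
    rw [mul_comm y x, mul_comm z x, ← h]
    abel
  simp_all

end Quadric

theorem exists_gradedPiece_two_le {I : Ideal (MvPolynomial (Fin 3) K)}
    [FiniteDimensional K (MvPolynomial (Fin 3) K ⧸ I)] (h : hilbFn I 2 ≤ 5) :
    ∃ l ∈ gradedPiece I 1, ∃ m ∈ gradedPiece I 1,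
      gradedPiece I 2 ≤ (gradedPiece I 1).map (LinearMap.mulLeft K l) ⊔
        (gradedPiece I 1).map (LinearMap.mulLeft K m) := by
  set x := Ideal.Quotient.mk I (X 0) with hxdef
  set y := Ideal.Quotient.mk I (X 1) with hydef
  set z := Ideal.Quotient.mk I (X 2) with hzdef
  have hx : x ∈ gradedPiece I 1 := mk_X_mem_gradedPiece 0
  have hy : y ∈ gradedPiece I 1 := mk_X_mem_gradedPiece 1
  have hz : z ∈ gradedPiece I 1 := mk_X_mem_gradedPiece 2
  have hdep : ¬ LinearIndependent K ![x * x, y * y, z * z, x * y, x * z, y * z] := by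
    intro hli
    have hspan : Submodule.span K (Set.range ![x * x, y * y, z * z, x * y, x * z, y * z]) ≤
        gradedPiece I 2 := by
      rw [Submodule.span_le]
      rintro _ ⟨i, rfl⟩
      fin_cases i
      exacts [mul_mem_gradedPiece hx hx, mul_mem_gradedPiece hy hy, mul_mem_gradedPiece hz hz,
        mul_mem_gradedPiece hx hy, mul_mem_gradedPiece hx hz, mul_mem_gradedPiece hy hz]
    have := Submodule.finrank_mono hspan
    rw [finrank_span_eq_card hli, Fintype.card_fin] at this
    exact absurd (this.trans h) (by norm_num)
  obtain ⟨g, hg, i, hi⟩ := Fintype.not_linearIndependent_iff.1 hdep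
  have hcov : QuadricsCovered (gradedPiece I 1) x y z := by
    refine quadricsCovered_of_relation hx hy hz (α := g 0) (β := g 1) (γ := g 2) (a := g 3)
      (b := g 4) (c := g 5) ?_ ?_
    · fin_cases i <;> simp_all
    · simpa [Fin.sum_univ_six] using hg
  obtain ⟨l, hl, m, hm, H⟩ := hcov
  refine ⟨l, hl, m, hm, gradedPiece_succ_le fun v a ha => ?_⟩
  set S := (gradedPiece I 1).map (LinearMap.mulLeft K l) ⊔
        (gradedPiece I 1).map (LinearMap.mulLeft K m)
  have hvw : ∀ v w : Fin 3, Ideal.Quotient.mk I (X v) * Ideal.Quotient.mk I (X w) ∈ S := by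
    intro v w
    fin_cases v <;> fin_cases w <;> refine H _ ?_ <;>
      simp [← hxdef, ← hydef, ← hzdef, mul_comm y x, mul_comm z x, mul_comm z y]
  have hle : gradedPiece I (0 + 1) ≤
      S.comap (LinearMap.mulLeft K (Ideal.Quotient.mk I (X v))) := by
    refine gradedPiece_succ_le fun w b hb => ?_
    obtain ⟨p, hp, rfl⟩ := mem_gradedPiece_iff.1 hb
    rw [← totalDegree_zero_iff_isHomogeneous, totalDegree_eq_zero_iff_eq_C] at hp
    rw [hp, mul_comm, ← map_mul, ← smul_eq_C_mul, ← Ideal.Quotient.mkₐ_eq_mk K, map_smul]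
    exact Submodule.smul_mem _ _ (hvw v w)
  exact hle ha

theorem sum_take_eq (t m i : ℕ) :
    (([1] ++ List.replicate t 2 ++ List.replicate m 1).take (i + 1)).sum =
      1 + min t i + min (t + m) i := by
  simp [List.take_append, List.take_replicate]
  omega

/-- The symmetric sequence with difference vector `(1, 2^t, 1^m)`. -/
theorem symSeq_eq (t m j i : ℕ) :
    symSeq ([1] ++ List.replicate t 2 ++ List.replicate m 1) j i =
      if i ≤ j then 1 + min t (min i (j - i)) + min (t + m) (min i (j - i)) else 0 := by
  rw [symSeq, sum_take_eq]

/-- The three families consist of the symmetric sequences with difference vector `(1, 2^t, 1^m)`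
and maximum at least seven. -/
theorem exists_family_iff (T : ℕ → ℕ) :
    (∃ s, 7 ≤ s ∧ ∃ k, 1 ≤ k ∧
      ((∀ i, T i = famA s k i) ∨ (∀ i, T i = famB s k i) ∨
       ∃ t, 3 ≤ t ∧ 2 * t + 1 ≤ s ∧ ∀ i, T i = famC t s k i)) ↔
    ∃ t m j, 1 ≤ t ∧ 7 ≤ 1 + 2 * t + m ∧ 2 * (t + m) ≤ j ∧
      ∀ i, T i = symSeq ([1] ++ List.replicate t 2 ++ List.replicate m 1) j i := by
  constructor
  · rintro ⟨s, hs, k, hk, h | h | ⟨t, ht, hts, h⟩⟩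
    · exact ⟨1, s - 3, k + 2 * s - 5, le_rfl, by omega, by omega, h⟩
    · exact ⟨2, s - 5, k + 2 * s - 7, by omega, by omega, by omega, h⟩
    · exact ⟨t, s - 2 * t - 1, k + 2 * s - 2 * t - 3, by omega, by omega, by omega, h⟩
  · rintro ⟨t, m, j, ht, hs, hj, h⟩
    refine ⟨1 + 2 * t + m, hs, j + 1 - 2 * (t + m), by omega, ?_⟩
    obtain rfl | rfl | ht3 : t = 1 ∨ t = 2 ∨ 3 ≤ t := by omega
    · refine Or.inl fun i => ?_
      rw [h, famA, show 1 + 2 * 1 + m - 3 = m by omega,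
        show j + 1 - 2 * (1 + m) + 2 * (1 + 2 * 1 + m) - 5 = j by omega]
      rfl
    · refine Or.inr (Or.inl fun i => ?_)
      rw [h, famB, show 1 + 2 * 2 + m - 5 = m by omega,
        show j + 1 - 2 * (2 + m) + 2 * (1 + 2 * 2 + m) - 7 = j by omega]
      rfl
    · refine Or.inr (Or.inr ⟨t, ht3, by omega, fun i => ?_⟩)
      rw [h, famC, show 1 + 2 * t + m - 2 * t - 1 = m by omega,
        show j + 1 - 2 * (t + m) + 2 * (1 + 2 * t + m) - 2 * t - 3 = j by omega]

/-- A symmetric sequence starting `1, 3` that is concave has difference vector `(1, 2^t, 1^m)`. -/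
theorem exists_eq_symSeq_of_concave {T : ℕ → ℕ} {j : ℕ} (h0 : T 0 = 1) (h1 : T 1 = 3)
    (hzero : ∀ i, j < i → T i = 0) (hsymm : ∀ i e, i + e = j → T i = T e)
    (hconc : ∀ i, i + 2 ≤ j → T (i + 2) + T i ≤ 2 * T (i + 1)) :
    ∃ t m, 1 ≤ t ∧ 2 * (t + m) ≤ j ∧
      ∀ i, T i = symSeq ([1] ++ List.replicate t 2 ++ List.replicate m 1) j i := by
  have hj : 2 ≤ j := by
    by_contra hlt
    obtain rfl | rfl : j = 0 ∨ j = 1 := by omega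
    · have := hzero 1 (by omega)
      omega
    · have := hsymm 0 1 rfl
      omega
  have hanti : ∀ a d, a + d + 1 ≤ j → T (a + d + 1) + T a ≤ T (a + d) + T (a + 1) := by
    intro a d
    induction d with
    | zero => intro _; simp [add_comm]
    | succ d ih =>
      intro had
      have h₁ := ih (by omega)
      have h₂ := hconc (a + d) (by omega)
      rw [show a + (d + 1) + 1 = a + d + 2 by omega, show a + (d + 1) = a + d + 1 by omega]
      omega
  have hmono : ∀ a, 2 * (a + 1) ≤ j → T a ≤ T (a + 1) := by
    intro a ha
    obtain ⟨d, hd⟩ := Nat.exists_eq_add_of_le ha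
    have h₁ := hanti a (d + 1) (by omega)
    have h₂ := hsymm a (a + (d + 1) + 1) (by omega)
    have h₃ := hsymm (a + 1) (a + (d + 1)) (by omega)
    omega
  have hind : ∀ n, 1 ≤ n → 2 * n ≤ j → ∃ t r, 1 ≤ t ∧ t ≤ r ∧ r ≤ n ∧
      ∀ i, i ≤ n → T i = 1 + min t i + min r i := by
    intro n hn
    induction n, hn using Nat.le_induction with
    | base =>
      intro _
      refine ⟨1, 1, le_rfl, le_rfl, le_rfl, fun i hi => ?_⟩
      interval_cases i <;> omega
    | succ n hn ih =>
      intro hnj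
      obtain ⟨t, r, ht, htr, hrn, H⟩ := ih (by omega)
      obtain ⟨p, rfl⟩ := Nat.exists_eq_add_of_le' hn
      have h₁ := H (p + 1) le_rfl
      have h₂ := H p (by omega)
      have h₃ := hconc p (by omega)
      have h₄ := hmono (p + 1) (by omega)
      rw [show p + 1 + 1 = p + 2 by omega] at *
      have hext : ∀ t' r', (∀ i, i ≤ p + 1 → min t' i + min r' i = min t i + min r i) →
          T (p + 2) = 1 + min t' (p + 2) + min r' (p + 2) →
          ∀ i, i ≤ p + 2 → T i = 1 + min t' i + min r' i := by
        intro t' r' he hl i hi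
        obtain rfl | hi' : i = p + 2 ∨ i ≤ p + 1 := by omega
        · exact hl
        · rw [H i hi', add_assoc, add_assoc, he i hi']
      obtain hd | hd | hd : T (p + 2) = T (p + 1) ∨ T (p + 2) = T (p + 1) + 1 ∨
          T (p + 2) = T (p + 1) + 2 := by omega
      · exact ⟨t, r, ht, htr, by omega, hext t r (fun _ _ => rfl) (by omega)⟩
      · exact ⟨t, p + 2, ht, by omega, le_rfl,
          hext t (p + 2) (fun i hi => by omega) (by omega)⟩
      · exact ⟨p + 2, p + 2, by omega, le_rfl, le_rfl,
          hext (p + 2) (p + 2) (fun i hi => by omega) (by omega)⟩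
  obtain ⟨t, r, ht, htr, hr, H⟩ := hind (j / 2) (by omega) (by omega)
  refine ⟨t, r - t, ht, by omega, fun i => ?_⟩
  rw [symSeq_eq, Nat.add_sub_cancel' htr]
  split_ifs with hij
  · obtain hi | hi : i ≤ j / 2 ∨ j - i ≤ j / 2 := by omega
    · rw [H i hi]
      omega
    · rw [hsymm i (j - i) (by omega), H _ hi]
      omega
  · exact hzero i (by omega)

theorem IsAG.exists_eq_symSeq {I : Ideal (MvPolynomial (Fin 3) K)} (hI : IsAG I)
    (h1 : hilbFn I 1 = 3) (h2 : hilbFn I 2 ≤ 5) :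
    ∃ t m j, 1 ≤ t ∧ 2 * (t + m) ≤ j ∧
      ∀ i, hilbFn I i = symSeq ([1] ++ List.replicate t 2 ++ List.replicate m 1) j i := by
  have : FiniteDimensional K (MvPolynomial (Fin 3) K ⧸ I) := hI.2.2.1
  obtain ⟨j, -, hzero, -, f, hf⟩ := hI.exists_pairing
  obtain ⟨l, hl, m, hm, hlm⟩ := exists_gradedPiece_two_le h2
  obtain ⟨t, r, h⟩ := exists_eq_symSeq_of_concave (T := hilbFn I) (j := j) (hilbFn_zero hI.2.1) h1
    (fun i hi => by rw [hilbFn, hzero i hi, finrank_bot])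
    (fun i e h => hilbFn_symm hf h) (fun i hi => hilbFn_concave hf hl hm hlm hi)
  exact ⟨t, r, j, h⟩
section DualIdeal

/-- The largest ideal on which the functional `φ` vanishes. -/
def dualIdeal (φ : MvPolynomial (Fin n) K →ₗ[K] K) : Ideal (MvPolynomial (Fin n) K) where
  carrier := {p | ∀ r, φ (r * p) = 0}
  add_mem' hp hq r := by rw [mul_add, map_add, hp r, hq r, add_zero]
  zero_mem' r := by rw [mul_zero, map_zero]
  smul_mem' c p hp r := by rw [smul_eq_mul, ← mul_assoc]; exact hp _

theorem monomial_eq_smul_one (e : Fin n →₀ ℕ) (c : K) : monomial e c = c • monomial e (1 : K) := by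
  rw [smul_monomial, smul_eq_mul, mul_one]

theorem mem_dualIdeal_iff_monomial {φ : MvPolynomial (Fin n) K →ₗ[K] K}
    {p : MvPolynomial (Fin n) K} :
    p ∈ dualIdeal φ ↔ ∀ e, φ (monomial e 1 * p) = 0 := by
  refine ⟨fun h e => h _, fun h r => ?_⟩
  rw [r.as_sum, Finset.sum_mul, map_sum]
  refine Finset.sum_eq_zero fun e _ => ?_
  rw [monomial_eq_smul_one, smul_mul_assoc, map_smul, h, smul_zero]

theorem gradedPiece_dualIdeal_eq_bot {φ : MvPolynomial (Fin n) K →ₗ[K] K} {j : ℕ}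
    (hφ : ∀ i p, IsHomogeneous p i → i ≠ j → φ p = 0) {i : ℕ} (hi : j < i) :
    gradedPiece (dualIdeal φ) i = ⊥ := by
  refine (Submodule.eq_bot_iff _).2 fun a ha => ?_
  obtain ⟨p, hp, rfl⟩ := mem_gradedPiece_iff.1 ha
  rw [Ideal.Quotient.eq_zero_iff_mem, mem_dualIdeal_iff_monomial]
  exact fun e => hφ (e.degree + i) _ ((isHomogeneous_monomial _ rfl).mul hp) (by omega)

theorem gradedPiece_dualIdeal_ne_bot {φ : MvPolynomial (Fin n) K →ₗ[K] K} {j : ℕ}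
    {w : MvPolynomial (Fin n) K} (hw : w.IsHomogeneous j) (hφw : φ w = 1) :
    gradedPiece (dualIdeal φ) j ≠ ⊥ := by
  refine (Submodule.ne_bot_iff _).2 ⟨_, mk_mem_gradedPiece hw, fun h => ?_⟩
  have := Ideal.Quotient.eq_zero_iff_mem.1 h 1
  rw [one_mul, hφw] at this
  exact one_ne_zero this

theorem isAG_dualIdeal {φ : MvPolynomial (Fin n) K →ₗ[K] K} {j : ℕ}
    (hφ : ∀ i p, IsHomogeneous p i → i ≠ j → φ p = 0) {w : MvPolynomial (Fin n) K}
    (hw : w.IsHomogeneous j) (hφw : φ w = 1) : IsAG (dualIdeal φ) := by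
  have hwI : w ∉ dualIdeal φ := fun h => by
    have := h 1
    rw [one_mul, hφw] at this
    exact one_ne_zero this
  have hwX : ∀ v : Fin n, X v * w ∈ dualIdeal φ := by
    intro v
    rw [mem_dualIdeal_iff_monomial]
    intro e
    refine hφ (e.degree + (1 + j)) _
      ((isHomogeneous_monomial _ rfl).mul ((isHomogeneous_X _ _).mul hw)) (by omega)
  refine ⟨fun p hp i => ?_, fun h => hwI (h ▸ Submodule.mem_top), ?_, ?_⟩
  · rw [mem_dualIdeal_iff_monomial]
    intro e
    have he : (monomial e (1 : K)).IsHomogeneous e.degree := isHomogeneous_monomial _ rfl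
    by_cases hij : e.degree + i = j
    · have h := hp (monomial e 1)
      rw [← sum_homogeneousComponent p, Finset.mul_sum, map_sum, Finset.sum_eq_single i] at h
      · exact h
      · intro k _ hk
        exact hφ _ _ (he.mul (homogeneousComponent_isHomogeneous k p)) (by omega)
      · intro hi
        rw [homogeneousComponent_eq_zero, mul_zero, map_zero]
        simpa [Nat.lt_succ_iff] using hi
    · exact hφ _ _ (he.mul (homogeneousComponent_isHomogeneous i p)) hij
  · let c : Fin n →₀ ℕ := Finsupp.equivFunOnFinite.symm fun _ => j
    have hmem : ∀ e, ¬ e ≤ c → ∀ a : K, monomial e a ∈ dualIdeal φ := by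
      intro e he a
      obtain ⟨v, hv⟩ : ∃ v, j < e v := by
        by_contra! h
        exact he fun v => h v
      have hdeg : j < e.degree := hv.trans_le (Finsupp.le_degree v e)
      rw [mem_dualIdeal_iff_monomial]
      intro e'
      exact hφ (e'.degree + e.degree) _
        ((isHomogeneous_monomial _ rfl).mul (isHomogeneous_monomial _ rfl)) (by omega)
    have htop : Submodule.span K ((fun e => Ideal.Quotient.mkₐ K (dualIdeal φ) (monomial e 1)) ''
        Set.Iic c) = ⊤ := by
      rw [eq_top_iff]
      rintro a -
      obtain ⟨p, rfl⟩ := Ideal.Quotient.mkₐ_surjective K _ a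
      rw [p.as_sum, map_sum]
      refine Submodule.sum_mem _ fun e _ => ?_
      by_cases he : e ≤ c
      · rw [monomial_eq_smul_one, map_smul]
        exact Submodule.smul_mem _ _ (Submodule.subset_span ⟨e, he, rfl⟩)
      · rw [Ideal.Quotient.mkₐ_eq_mk, Ideal.Quotient.eq_zero_iff_mem.2 (hmem e he _)]
        exact Submodule.zero_mem _
    exact Module.Finite.of_fg_top ⟨_, by rw [((Set.finite_Iic c).image _).coe_toFinset, htop]⟩
  · have hws : Ideal.Quotient.mk (dualIdeal φ) w ∈ socleSub (dualIdeal φ) := by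
      rw [mem_socleSub]
      intro v
      rw [← map_mul, Ideal.Quotient.eq_zero_iff_mem]
      exact hwX v
    refine finrank_eq_one_iff'.2 ⟨⟨_, hws⟩, fun h => ?_, ?_⟩
    · exact hwI (Ideal.Quotient.eq_zero_iff_mem.1 (congrArg Subtype.val h))
    · rintro ⟨s, hs⟩
      obtain ⟨q, rfl⟩ := Ideal.Quotient.mk_surjective s
      refine ⟨φ q, Subtype.ext ?_⟩
      change φ q • Ideal.Quotient.mkₐ K (dualIdeal φ) w = Ideal.Quotient.mkₐ K (dualIdeal φ) q
      rw [← map_smul, Ideal.Quotient.mkₐ_eq_mk, Ideal.Quotient.eq, mem_dualIdeal_iff_monomial]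
      have hqX : ∀ v : Fin n, X v * q ∈ dualIdeal φ := by
        intro v
        have := mem_socleSub.1 hs v
        rwa [← map_mul, Ideal.Quotient.eq_zero_iff_mem] at this
      intro e
      rw [mul_sub, mul_smul_comm, map_sub, map_smul]
      by_cases he : e = 0
      · rw [he, monomial_zero', C_1, one_mul, one_mul, hφw, smul_eq_mul, mul_one, sub_self]
      · obtain ⟨v, hv⟩ := Finsupp.ne_iff.1 he
        have hle : Finsupp.single v 1 ≤ e := by
          rw [Finsupp.single_le_iff]
          exact Nat.one_le_iff_ne_zero.2 hv
        have hsplit : monomial e (1 : K) = monomial (e - Finsupp.single v 1) 1 * X v := by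
          rw [X, monomial_mul, one_mul, tsub_add_cancel_of_le hle]
        rw [hsplit, mul_assoc, mul_assoc, hwX v, hqX v, smul_zero, sub_zero]

end DualIdeal

section Construction

/-- The exponent vector of `x ^ p * y ^ q * z ^ r`. -/
def expVec (p q r : ℕ) : Fin 3 →₀ ℕ := Finsupp.equivFunOnFinite.symm ![p, q, r]

theorem expVec_eq_iff {p q r p' q' r' : ℕ} :
    expVec p q r = expVec p' q' r' ↔ p = p' ∧ q = q' ∧ r = r' := by
  simp [expVec]

theorem expVec_add (p q r p' q' r' : ℕ) :
    expVec p q r + expVec p' q' r' = expVec (p + p') (q + q') (r + r') := by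
  ext i
  fin_cases i <;> rfl

theorem degree_expVec (p q r : ℕ) : (expVec p q r).degree = p + q + r := by
  simp [Finsupp.degree_eq_sum, expVec, Fin.sum_univ_three]

theorem exists_eq_expVec (e : Fin 3 →₀ ℕ) : ∃ p q r, e = expVec p q r :=
  ⟨e 0, e 1, e 2, by ext i; fin_cases i <;> rfl⟩

variable (K) in
/-- The functional dual to the form `x ^ a * z ^ (j - a) + y ^ b * z ^ (j - b)`. -/
def binomialFunctional (a b j : ℕ) : MvPolynomial (Fin 3) K →ₗ[K] K :=
  lcoeff K (expVec a 0 (j - a)) + lcoeff K (expVec 0 b (j - b))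

theorem binomialFunctional_monomial_mul (a b j p q r p' q' r' : ℕ) :
    binomialFunctional K a b j (monomial (expVec p q r) 1 * monomial (expVec p' q' r') 1) =
      (if p + p' = a ∧ q + q' = 0 ∧ r + r' = j - a then 1 else 0) +
        (if p + p' = 0 ∧ q + q' = b ∧ r + r' = j - b then 1 else 0) := by
  simp [binomialFunctional, monomial_mul, expVec_add, coeff_monomial, expVec_eq_iff]

theorem binomialFunctional_eq_zero {a b j : ℕ} (haj : a ≤ j) (hbj : b ≤ j) (i : ℕ)
    (p : MvPolynomial (Fin 3) K) (hp : p.IsHomogeneous i) (hi : i ≠ j) :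
    binomialFunctional K a b j p = 0 := by
  rw [binomialFunctional, LinearMap.add_apply, lcoeff_apply, lcoeff_apply, hp.coeff_eq_zero,
    hp.coeff_eq_zero, add_zero] <;> rw [degree_expVec] <;> omega

theorem binomialFunctional_monomial {a b j : ℕ} (ha : 0 < a) :
    binomialFunctional K a b j (monomial (expVec a 0 (j - a)) 1) = 1 := by
  have : ¬ (a = 0 ∧ 0 = b ∧ j - a = j - b) := by omega
  simp [binomialFunctional, coeff_monomial, expVec_eq_iff, this]

theorem hilbFn_binomialFunctional {t m j i : ℕ} (ht : 1 ≤ t) (hj : 2 * (t + m) ≤ j)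
    (hi : 2 * i ≤ j) :
    hilbFn (dualIdeal (binomialFunctional K t (t + m + 1) j)) i =
      1 + min t i + min (t + m) i := by
  set I := dualIdeal (binomialFunctional K t (t + m + 1) j) with hI
  let e : Option (Fin (min t i) ⊕ Fin (min (t + m) i)) → Fin 3 →₀ ℕ
    | none => expVec 0 0 i
    | some (.inl u) => expVec (u + 1) 0 (i - (u + 1))
    | some (.inr v) => expVec 0 (v + 1) (i - (v + 1))
  let d : Option (Fin (min t i) ⊕ Fin (min (t + m) i)) → Fin 3 →₀ ℕ
    | none => expVec t 0 (j - t - i)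
    | some (.inl u) => expVec (t - (u + 1)) 0 (j + (u + 1) - t - i)
    | some (.inr v) => expVec 0 (t + m - v) (j + v - (t + m) - i)
  have hpair : ∀ k l, binomialFunctional K t (t + m + 1) j (monomial (d l) 1 * monomial (e k) 1) =
      if k = l then 1 else 0 := by
    rintro (_ | ⟨u, hu⟩ | ⟨u, hu⟩) (_ | ⟨v, hv⟩ | ⟨v, hv⟩) <;>
      simp only [e, d, binomialFunctional_monomial_mul, reduceCtorEq, Option.some.injEq,
        Sum.inl.injEq, Sum.inr.injEq, Fin.mk.injEq, true_and, false_and,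
        and_false] <;>
      split_ifs <;> first | contradiction | omega | simp
  let b := fun k => Ideal.Quotient.mkₐ K I (monomial (e k) 1)
  have hli : LinearIndependent K b := by
    rw [Fintype.linearIndependent_iff]
    intro g hg l
    have hmem : ∑ k, g k • monomial (e k) (1 : K) ∈ I := by
      rw [← Ideal.Quotient.eq_zero_iff_mem, ← Ideal.Quotient.mkₐ_eq_mk K, map_sum]
      simpa only [map_smul] using hg
    have h := hmem (monomial (d l) 1)
    rw [Finset.mul_sum, map_sum] at h
    simpa only [mul_smul_comm, map_smul, hpair, smul_eq_mul, mul_ite, mul_one, mul_zero,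
      Finset.sum_ite_eq', Finset.mem_univ, if_true] using h
  have hmono : ∀ p q r, p + q + r = i →
      Ideal.Quotient.mkₐ K I (monomial (expVec p q r) 1) ∈ Submodule.span K (Set.range b) := by
    intro p q r hpqr
    have hb : ∀ k, e k = expVec p q r →
        Ideal.Quotient.mkₐ K I (monomial (expVec p q r) 1) ∈ Submodule.span K (Set.range b) :=
      fun k hk => Submodule.subset_span ⟨k, by simp only [b, hk]⟩
    have hz : (p ≠ 0 ∧ q ≠ 0 ∨ t < p ∨ t + m + 1 < q) →
        Ideal.Quotient.mkₐ K I (monomial (expVec p q r) 1) ∈ Submodule.span K (Set.range b) := by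
      intro h
      have : monomial (expVec p q r) (1 : K) ∈ I := by
        rw [hI, mem_dualIdeal_iff_monomial]
        intro e'
        obtain ⟨p', q', r', rfl⟩ := exists_eq_expVec e'
        rw [binomialFunctional_monomial_mul, if_neg (by omega), if_neg (by omega), add_zero]
      rw [Ideal.Quotient.mkₐ_eq_mk, Ideal.Quotient.eq_zero_iff_mem.2 this]
      exact Submodule.zero_mem _
    by_cases h : p ≠ 0 ∧ q ≠ 0 ∨ t < p ∨ t + m + 1 < q
    · exact hz h
    obtain ⟨hp, hq⟩ | ⟨hp, hq⟩ | ⟨hp, hq, hqt⟩ | ⟨hp, hq⟩ :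
      (p = 0 ∧ q = 0) ∨ (p ≠ 0 ∧ q = 0) ∨ (p = 0 ∧ q ≠ 0 ∧ q ≤ t + m) ∨
        (p = 0 ∧ q = t + m + 1) := by omega
    · exact hb none (expVec_eq_iff.2 ⟨by omega, by omega, by omega⟩)
    · exact hb (some (.inl ⟨p - 1, by omega⟩))
        (expVec_eq_iff.2 ⟨by dsimp only; omega, by omega, by dsimp only; omega⟩)
    · exact hb (some (.inr ⟨q - 1, by omega⟩))
        (expVec_eq_iff.2 ⟨by omega, by dsimp only; omega, by dsimp only; omega⟩)
    · have heq : Ideal.Quotient.mkₐ K I (monomial (expVec p q r) 1) =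
          Ideal.Quotient.mkₐ K I (monomial (expVec t 0 (i - t)) 1) := by
        rw [Ideal.Quotient.mkₐ_eq_mk, Ideal.Quotient.eq, hI, mem_dualIdeal_iff_monomial]
        intro e'
        obtain ⟨p', q', r', rfl⟩ := exists_eq_expVec e'
        rw [mul_sub, map_sub, binomialFunctional_monomial_mul, binomialFunctional_monomial_mul]
        split_ifs <;> first | omega | simp
      rw [heq]
      refine Submodule.subset_span ⟨some (.inl ⟨t - 1, by omega⟩), ?_⟩
      simp only [b, e, Nat.sub_add_cancel ht]
  have hspan : gradedPiece I i = Submodule.span K (Set.range b) := by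
    refine le_antisymm ?_ (Submodule.span_le.2 ?_)
    · rintro _ ⟨p, hp, rfl⟩
      have hp' : p.IsHomogeneous i := hp
      change Ideal.Quotient.mkₐ K I p ∈ _
      rw [p.as_sum, map_sum]
      refine Submodule.sum_mem _ fun c hc => ?_
      have hdeg : c.degree = i := by
        by_contra hne
        exact (mem_support_iff.1 hc) (hp'.coeff_eq_zero hne)
      obtain ⟨p', q', r', rfl⟩ := exists_eq_expVec c
      rw [degree_expVec] at hdeg
      rw [monomial_eq_smul_one, map_smul]
      exact Submodule.smul_mem _ _ (hmono _ _ _ hdeg)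
    · rintro _ ⟨k, rfl⟩
      refine mk_mem_gradedPiece (isHomogeneous_monomial _ ?_)
      obtain _ | ⟨u, hu⟩ | ⟨u, hu⟩ := k <;> simp only [e, degree_expVec] <;> omega
  rw [hilbFn, hspan, finrank_span_eq_card hli]
  simp
  omega

theorem exists_isAG_of_symSeq {t m j : ℕ} (ht : 1 ≤ t) (hj : 2 * (t + m) ≤ j) :
    ∃ I : Ideal (MvPolynomial (Fin 3) K), IsAG I ∧
      ∀ i, hilbFn I i = symSeq ([1] ++ List.replicate t 2 ++ List.replicate m 1) j i := by
  have hφ := binomialFunctional_eq_zero (K := K) (a := t) (b := t + m + 1) (j := j) (by omega)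
    (by omega)
  have hw : (monomial (expVec t 0 (j - t)) (1 : K)).IsHomogeneous j :=
    isHomogeneous_monomial _ (by rw [degree_expVec]; omega)
  have hφw : binomialFunctional K t (t + m + 1) j (monomial (expVec t 0 (j - t)) 1) = 1 :=
    binomialFunctional_monomial ht
  have hAG := isAG_dualIdeal hφ hw hφw
  refine ⟨_, hAG, fun i => ?_⟩
  have := hAG.2.2.1
  obtain ⟨j', hj', hzero, -, f, hf⟩ := hAG.exists_pairing
  obtain rfl : j' = j := by
    refine le_antisymm ?_ ?_ <;> by_contra! h
    · exact hj' (gradedPiece_dualIdeal_eq_bot hφ h)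
    · exact gradedPiece_dualIdeal_ne_bot hw hφw (hzero _ h)
  rw [symSeq_eq]
  split_ifs with hij
  · obtain hi | hi : 2 * i ≤ j' ∨ 2 * (j' - i) ≤ j' := by omega
    · rw [hilbFn_binomialFunctional ht hj hi]
      omega
    · rw [hilbFn_symm hf (show i + (j' - i) = j' by omega), hilbFn_binomialFunctional ht hj hi]
      omega
  · rw [hilbFn, hzero i (by omega), finrank_bot]

end Construction

/-- the codimension three Gorenstein sequences of order two
(`T_1 = 3`, `T_2 ≤ 5`), besides those of Sperner number at most six, are exactly
`(1,3,4,…,s-1,s^k,s-1,…,3,1)`, `(1,3,5,6,…,s-1,s^k,s-1,…,3,1)` and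
`(1,3,5,7,…,2t+1,2t+2,…,s^k,…,3,1)` with `s ≥ 7`, `k ≥ 1` (and `t ≥ 3`,
`s ≥ 2t+1`). -/
theorem stmt5 (T : ℕ → ℕ) :
    ((∃ I : Ideal (MvPolynomial (Fin 3) K), IsAG I ∧ ∀ i, hilbFn I i = T i) ∧
        T 1 = 3 ∧ T 2 ≤ 5 ∧ ¬(∀ i, T i ≤ 6)) ↔
    ∃ s, 7 ≤ s ∧ ∃ k, 1 ≤ k ∧
      ((∀ i, T i = famA s k i) ∨ (∀ i, T i = famB s k i) ∨
       ∃ t, 3 ≤ t ∧ 2 * t + 1 ≤ s ∧ ∀ i, T i = famC t s k i) := by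
  rw [exists_family_iff]
  constructor
  · rintro ⟨⟨I, hI, hT⟩, h1, h2, h6⟩
    obtain ⟨t, m, j, ht, hj, h⟩ := hI.exists_eq_symSeq ((hT 1).trans h1) ((hT 2).trans_le h2)
    refine ⟨t, m, j, ht, ?_, hj, fun i => (hT i).symm.trans (h i)⟩
    by_contra! hlt
    refine h6 fun i => ?_
    rw [← hT, h, symSeq_eq]
    split_ifs <;> omega
  · rintro ⟨t, m, j, ht, hs, hj, h⟩
    obtain ⟨I, hI, hH⟩ := exists_isAG_of_symSeq (K := K) ht hj
    refine ⟨⟨I, hI, fun i => (hH i).trans (h i).symm⟩, ?_, ?_, fun h6 => ?_⟩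
    · rw [h, symSeq_eq, if_pos (by omega)]
      omega
    · rw [h, symSeq_eq, if_pos (by omega)]
      omega
    · have := h6 (t + m)
      rw [h, symSeq_eq, if_pos (by omega)] at this
      omega
end
end

section
/- Let A = k[x,y,z]/I be an Artinian Gorenstein algebra of socle degree j with Hilbert function beginning (1,3,4,…) and with T(A)_3 = 5, so T(A) = (1,3,4,5,…,s−1,s^k,s−1,…,4,3,1). Then, up to a linear change of coordinates, I_2 = ⟨xy, xz⟩ or I_2 = ⟨x^2, xy⟩; in either case the two quadrics in I_2 share a common linear factor, and B = k[x,y,z]/(I : x) has constant Hilbert function T(B) = (1,1,…,1) (in degrees 0 through j−1). -/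
/- Common background: standard graded Artinian (Gorenstein) quotients of a
polynomial ring, their graded pieces, Hilbert function, socle degree,
Lefschetz-type conditions, and Macaulay contraction duality. -/

noncomputable section
open MvPolynomial
open scoped Classical

variable {K : Type*} [Field K] {n : ℕ}

lemma finrank_homogeneousSubmodule (d : ℕ) :
    Module.finrank K (homogeneousSubmodule (Fin n) K d) = n.multichoose d := by
  have e : Sym (Fin n) d ≃ {e : Fin n →₀ ℕ | e.degree = d} :=
    (Sym.equivNatSum (Fin n) d).trans (Equiv.subtypeEquivRight fun P => by
      simp [Finsupp.degree_eq_sum, Finsupp.sum_fintype])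
  have : Fintype {e : Fin n →₀ ℕ | e.degree = d} := Fintype.ofEquiv _ e
  rw [homogeneousSubmodule_eq_finsupp_supported,
    (AddMonoidAlgebra.supportedEquivFinsupp _).finrank_eq, Module.finrank_finsupp_self,
    ← Nat.card_eq_fintype_card, ← Nat.card_congr e, Sym.natCard_sym_eq_multichoose,
    Nat.card_eq_fintype_card, Fintype.card_fin]

instance finite_homogeneousSubmodule (d : ℕ) :
    Module.Finite K (homogeneousSubmodule (Fin n) K d) :=
  Module.Finite.iff_fg.mpr (homogeneousSubmodule_fg ..)

instance finite_gradedPiece (I : Ideal (MvPolynomial (Fin n) K)) (i : ℕ) :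
    Module.Finite K (gradedPiece I i) :=
  inferInstanceAs (Module.Finite K ((homogeneousSubmodule (Fin n) K i).map _))

instance finite_inf_homogeneousSubmodule (S : Submodule K (MvPolynomial (Fin n) K)) (i : ℕ) :
    Module.Finite K (S ⊓ homogeneousSubmodule (Fin n) K i : Submodule K _) :=
  Submodule.finiteDimensional_of_le inf_le_right

lemma hilbFn_add_finrank_inf (I : Ideal (MvPolynomial (Fin n) K)) (i : ℕ) :
    hilbFn I i + Module.finrank K
      (I.restrictScalars K ⊓ homogeneousSubmodule (Fin n) K i : Submodule K _) =
      n.multichoose i := by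
  set V := homogeneousSubmodule (Fin n) K i
  set f := (Ideal.Quotient.mkₐ K I).toLinearMap
  have hr := LinearMap.finrank_range_add_finrank_ker (f.domRestrict V)
  have hker : (LinearMap.ker (f.domRestrict V)).map V.subtype = I.restrictScalars K ⊓ V := by
    ext p
    simp [f, Ideal.Quotient.eq_zero_iff_mem, and_comm]
  rw [LinearMap.range_domRestrict, finrank_homogeneousSubmodule,
    ← Submodule.finrank_map_subtype_eq, hker] at hr
  exact hr

lemma hilbFn_eq_zero_iff {I : Ideal (MvPolynomial (Fin n) K)} {i : ℕ} :
    hilbFn I i = 0 ↔ ∀ p : MvPolynomial (Fin n) K, p.IsHomogeneous i → p ∈ I := by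
  rw [hilbFn, Submodule.finrank_eq_zero, gradedPiece, ← le_bot_iff, Submodule.map_le_iff_le_comap]
  simp [SetLike.le_def, Ideal.Quotient.eq_zero_iff_mem]

lemma gradedPiece_one_pow (I : Ideal (MvPolynomial (Fin n) K)) (i : ℕ) :
    gradedPiece I 1 ^ i = gradedPiece I i := by
  rw [gradedPiece, gradedPiece, ← homogeneousSubmodule_one_pow K i,
    Submodule.map_pow]

lemma gradedPiece_succ (I : Ideal (MvPolynomial (Fin n) K)) (i : ℕ) :
    gradedPiece I (i + 1) = gradedPiece I i * gradedPiece I 1 := by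
  rw [← gradedPiece_one_pow I (i + 1), Submodule.pow_succ, gradedPiece_one_pow]

/-- An algebra generated by at most one linear form has Hilbert function at most one. -/
lemma hilbFn_le_one {I : Ideal (MvPolynomial (Fin n) K)} (h : hilbFn I 1 ≤ 1) (i : ℕ) :
    hilbFn I i ≤ 1 := by
  obtain ⟨t, ht⟩ := (Submodule.finrank_le_one_iff_isPrincipal _).mp h
  rw [hilbFn, ← gradedPiece_one_pow, ht, Submodule.span_pow, Set.singleton_pow]
  exact (finrank_span_le_card _).trans (by simp)

lemma hilbFn_eq_zero_of_le {I : Ideal (MvPolynomial (Fin n) K)} {i k : ℕ} (hik : i ≤ k)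
    (h : hilbFn I i = 0) : hilbFn I k = 0 := by
  induction k, hik using Nat.le_induction with
  | base => exact h
  | succ k _ ih =>
    rw [hilbFn, Submodule.finrank_eq_zero] at ih ⊢
    rw [gradedPiece_succ, ih, Submodule.bot_mul]

lemma exists_hilbFn_eq_zero {I : Ideal (MvPolynomial (Fin n) K)} (hI : IsHomogIdeal I)
    [FiniteDimensional K (MvPolynomial (Fin n) K ⧸ I)] : ∃ i, hilbFn I i = 0 := by
  by_contra! h
  have h' : ∀ i, ∃ p : MvPolynomial (Fin n) K, p.IsHomogeneous i ∧ p ∉ I := fun i => by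
    simpa [hilbFn_eq_zero_iff] using h i
  choose p hp hpI using h'
  have hli : LinearIndependent K fun i => Ideal.Quotient.mkₐ K I (p i) := by
    rw [linearIndependent_iff']
    intro s g hg i hi
    have hmem : ∑ k ∈ s, g k • p k ∈ I := by
      rw [← Ideal.Quotient.eq_zero_iff_mem, ← Ideal.Quotient.mkₐ_eq_mk K, map_sum]
      simpa only [map_smul] using hg
    have hc := hI _ hmem i
    rw [map_sum, Finset.sum_eq_single i] at hc
    · rw [map_smul, homogeneousComponent_eq_self (hp i)] at hc
      by_contra hgi
      exact hpI i ((Submodule.smul_mem_iff (I.restrictScalars K) hgi).mp hc)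
    · intro k _ hki
      rw [map_smul, homogeneousComponent_of_mem (hp k), if_neg hki.symm, smul_zero]
    · exact fun hi' => absurd hi hi'
  exact not_finite_iff_infinite.mpr inferInstance hli.finite

lemma hilbFn_eq_zero_iff_socDeg_lt {I : Ideal (MvPolynomial (Fin n) K)} (hI : IsHomogIdeal I)
    [FiniteDimensional K (MvPolynomial (Fin n) K ⧸ I)] (hne : I ≠ ⊤) (i : ℕ) :
    hilbFn I i = 0 ↔ socDeg I < i := by
  obtain ⟨N, hN⟩ := exists_hilbFn_eq_zero hI
  have hb : BddAbove {i | hilbFn I i ≠ 0} :=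
    ⟨N, fun k hk => le_of_not_ge fun hNk => hk (hilbFn_eq_zero_of_le hNk hN)⟩
  have h0 : hilbFn I 0 ≠ 0 := fun h =>
    hne ((Ideal.eq_top_iff_one I).mpr (hilbFn_eq_zero_iff.mp h 1 (isHomogeneous_one ..)))
  have hj : hilbFn I (socDeg I) ≠ 0 := Nat.sSup_mem ⟨0, h0⟩ hb
  refine ⟨fun h => lt_of_not_ge fun hle => hj (hilbFn_eq_zero_of_le hle h), fun h => ?_⟩
  by_contra hne'
  exact h.not_ge (le_csSup hb hne')

lemma mk_mem_socleSub {I : Ideal (MvPolynomial (Fin n) K)} {p : MvPolynomial (Fin n) K} :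
    Ideal.Quotient.mk I p ∈ socleSub I ↔ ∀ v, X v * p ∈ I := by
  simp [socleSub, ← map_mul, Ideal.Quotient.eq_zero_iff_mem]

/-- In a graded Artinian Gorenstein algebra every nonzero homogeneous socle element has
degree the socle degree. -/
lemma IsAG.eq_socDeg_of_mem_socleSub {I : Ideal (MvPolynomial (Fin n) K)} (hI : IsAG I)
    {p : MvPolynomial (Fin n) K} {d : ℕ} (hp : p.IsHomogeneous d) (hpI : p ∉ I)
    (hs : ∀ v, X v * p ∈ I) : d = socDeg I := by
  obtain ⟨hhom, hne, _, hsoc⟩ := hI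
  have hlt := hilbFn_eq_zero_iff_socDeg_lt hhom hne
  obtain ⟨g, hg, hgI⟩ : ∃ g : MvPolynomial (Fin n) K, g.IsHomogeneous (socDeg I) ∧ g ∉ I := by
    simpa [hilbFn_eq_zero_iff] using mt (hlt (socDeg I)).mp (lt_irrefl _)
  have hgs : ∀ v, X v * g ∈ I := fun v =>
    hilbFn_eq_zero_iff.mp ((hlt (1 + socDeg I)).mpr (by omega)) _ ((isHomogeneous_X K v).mul hg)
  obtain ⟨c, hc⟩ := (finrank_eq_one_iff_of_nonzero' (⟨_, mk_mem_socleSub.mpr hs⟩ : socleSub I)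
    (by simpa [Subtype.ext_iff, Ideal.Quotient.eq_zero_iff_mem] using hpI)).mp hsoc
    ⟨_, mk_mem_socleSub.mpr hgs⟩
  have hc' : c • p - g ∈ I := by
    rw [← Ideal.Quotient.eq_zero_iff_mem, ← Ideal.Quotient.mkₐ_eq_mk K, map_sub, map_smul,
      sub_eq_zero]
    exact congrArg Subtype.val hc
  by_contra hd
  have := hhom _ hc' (socDeg I)
  rw [map_sub, map_smul, homogeneousComponent_of_mem hp, if_neg (Ne.symm hd),
    homogeneousComponent_eq_self hg, smul_zero, zero_sub, neg_mem_iff] at this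
  exact hgI this

/-- The quotient by the colon ideal of a linear form has socle degree one less. -/
lemma IsAG.hilbFn_colon_eq_zero_iff {I : Ideal (MvPolynomial (Fin n) K)} (hI : IsAG I)
    {x : MvPolynomial (Fin n) K} (hx : x.IsHomogeneous 1) (hxI : x ∉ I) (i : ℕ) :
    hilbFn (Submodule.colon I (Ideal.span {x})) i = 0 ↔ socDeg I ≤ i := by
  set C := Submodule.colon I (Ideal.span {x})
  have hC : ∀ p, p ∈ C ↔ p * x ∈ I := fun p => Ideal.mem_colon_span_singleton
  have : FiniteDimensional K (MvPolynomial (Fin n) K ⧸ I) := hI.2.2.1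
  have hlt := hilbFn_eq_zero_iff_socDeg_lt hI.1 hI.2.1
  have hj : hilbFn C (socDeg I) = 0 := hilbFn_eq_zero_iff.mpr fun p hp =>
    (hC p).mpr (hilbFn_eq_zero_iff.mp ((hlt (socDeg I + 1)).mpr (by omega)) _ (hp.mul hx))
  have hex : ∃ i, hilbFn C i = 0 := ⟨_, hj⟩
  have hfind : Nat.find hex = socDeg I := by
    have hspec := Nat.find_spec hex
    rcases he : Nat.find hex with _ | e
    · rw [he] at hspec
      exact absurd ((hC 1).mp (hilbFn_eq_zero_iff.mp hspec 1 (isHomogeneous_one ..)))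
        (by simpa using hxI)
    · obtain ⟨f, hf, hfC⟩ : ∃ f : MvPolynomial (Fin n) K, f.IsHomogeneous e ∧ f ∉ C := by
        simpa [hilbFn_eq_zero_iff] using Nat.find_min hex (m := e) (by omega)
      rw [he] at hspec
      refine hI.eq_socDeg_of_mem_socleSub (hf.mul hx) (by rwa [← hC]) fun v => ?_
      rw [← mul_assoc, ← hC]
      exact hilbFn_eq_zero_iff.mp hspec _ (by
        simpa [add_comm] using (isHomogeneous_X K v).mul hf)
  exact ⟨fun h => hfind ▸ Nat.find_min' hex h, fun h => hilbFn_eq_zero_of_le h hj⟩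

lemma MvPolynomial.IsHomogeneous.irreducible {p : MvPolynomial (Fin n) K}
    (hp : p.IsHomogeneous 1) (h0 : p ≠ 0) : Irreducible p := by
  refine irreducible_of_totalDegree_eq_one (hp.totalDegree h0) fun c hc => ?_
  obtain ⟨d, hd⟩ := ne_zero_iff.mp h0
  exact isUnit_of_dvd_unit (hc d) (isUnit_iff_ne_zero.mpr hd)

/-- A cofactor of a homogeneous polynomial may be read off in the complementary degree. -/
lemma MvPolynomial.IsHomogeneous.exists_mul_eq_of_dvd {p q : MvPolynomial (Fin n) K} {a b : ℕ}
    (hp : p.IsHomogeneous a) (hq : q.IsHomogeneous (a + b)) (h : p ∣ q) :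
    ∃ r : MvPolynomial (Fin n) K, r.IsHomogeneous b ∧ q = p * r := by
  obtain ⟨r, rfl⟩ := h
  let := gradedAlgebra (σ := Fin n) (R := K)
  refine ⟨homogeneousComponent b r, homogeneousComponent_isHomogeneous .., ?_⟩
  have h := DirectSum.coe_decompose_mul_add_of_left_mem (homogeneousSubmodule (Fin n) K)
    (j := b) (b := r) hp
  rw [DirectSum.decompose_of_mem_same _ hq] at h
  rwa [← decomposition.decompose'_apply]

/-- Two independent quadrics with a linear syzygy share a linear factor. -/
lemma exists_common_linear_factor {q : Fin 2 → MvPolynomial (Fin n) K}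
    (hq : ∀ i, (q i).IsHomogeneous 2) (hli : LinearIndependent K q)
    {l m : MvPolynomial (Fin n) K} (hl : l.IsHomogeneous 1) (hm : m.IsHomogeneous 1)
    (hlm : (l, m) ≠ 0) (h : l * q 0 + m * q 1 = 0) :
    ∃ x : MvPolynomial (Fin n) K, x.IsHomogeneous 1 ∧ q 0 = x * -m ∧ q 1 = x * l := by
  have hl0 : l ≠ 0 := by
    rintro rfl
    have : m ≠ 0 := by simpa using hlm
    simp [this, hli.ne_zero 1] at h
  have hdvd : l ∣ m * q 1 := ⟨-q 0, by linear_combination h⟩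
  rcases (hl.irreducible hl0).prime.dvd_or_dvd hdvd with hd | hd
  · obtain ⟨c, hc, rfl⟩ := hl.exists_mul_eq_of_dvd (b := 0) hm hd
    obtain ⟨c, rfl⟩ : ∃ a, c = C a := ⟨_, (totalDegree_eq_zero_iff_eq_C (p := c)).mp
      (Nat.le_zero.mp hc.totalDegree_le)⟩
    have h2 : q 0 + C c * q 1 = 0 :=
      (mul_eq_zero.mp (show l * (q 0 + C c * q 1) = 0 by linear_combination h)).resolve_left hl0
    have h3 := Fintype.linearIndependent_iff.mp hli ![1, c]
      (by simpa [Fin.sum_univ_two, smul_eq_C_mul] using h2) 0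
    simp at h3
  · obtain ⟨x, hx, hqx⟩ := hl.exists_mul_eq_of_dvd (b := 1) (hq 1) hd
    refine ⟨x, hx, mul_left_cancel₀ hl0 ?_, by rw [hqx, mul_comm]⟩
    rw [hqx] at h
    linear_combination h

/-- if `A = k[x,y,z]/I` is Artinian Gorenstein of socle degree `j`
with Hilbert function beginning `(1,3,4,…)` and `T(A)_3 = 5`, then up to coordinates
`I_2 = ⟨xy, xz⟩` or `⟨x², xy⟩`: i.e. `I_2` is spanned by two quadrics with a common
linear factor `x` (times two independent linear forms), and `B = k[x,y,z]/(I : x)`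
has constant Hilbert function `(1,1,…,1)` in degrees `0` through `j - 1`. -/
theorem stmt11 (hK : Infinite K) (I : Ideal (MvPolynomial (Fin 3) K)) (j : ℕ)
    (hAG : IsAG I) (hsoc : socDeg I = j)
    (h1 : hilbFn I 1 = 3) (h2 : hilbFn I 2 = 4) (h3 : hilbFn I 3 = 5) :
    ∃ x l₁ l₂ : MvPolynomial (Fin 3) K,
      x.IsHomogeneous 1 ∧ l₁.IsHomogeneous 1 ∧ l₂.IsHomogeneous 1 ∧
      LinearIndependent K ![l₁, l₂] ∧
      Submodule.restrictScalars K I ⊓ homogeneousSubmodule (Fin 3) K 2 =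
        Submodule.span K {x * l₁, x * l₂} ∧
      (∀ i, i ≤ j - 1 → hilbFn (Submodule.colon I (Ideal.span {x})) i = 1) ∧
      (∀ i, j - 1 < i → hilbFn (Submodule.colon I (Ideal.span {x})) i = 0) := by
  obtain ⟨hhom, hne, hfin, hs⟩ := id hAG
  subst hsoc
  have r1 := hilbFn_add_finrank_inf I 1
  have r2 := hilbFn_add_finrank_inf I 2
  have r3 := hilbFn_add_finrank_inf I 3
  rw [h1, show Nat.multichoose 3 1 = 3 by simp] at r1
  rw [h2, show Nat.multichoose 3 2 = 6 by rw [Nat.multichoose_eq]; rfl] at r2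
  rw [h3, show Nat.multichoose 3 3 = 10 by rw [Nat.multichoose_eq]; rfl] at r3
  set I' := Submodule.restrictScalars K I
  have hI1 : ∀ p : MvPolynomial (Fin 3) K, p.IsHomogeneous 1 → p ∈ I → p = 0 := by
    intro p hp hpI
    have : I' ⊓ homogeneousSubmodule (Fin 3) K 1 = ⊥ :=
      Submodule.finrank_eq_zero.mp (by omega)
    exact (Submodule.mem_bot K).mp (this ▸ ⟨hpI, hp⟩)
  let b := Module.finBasisOfFinrankEq K (I' ⊓ homogeneousSubmodule (Fin 3) K 2 : Submodule K _)
    (n := 2) (by omega)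
  set q : Fin 2 → MvPolynomial (Fin 3) K := fun i => b i
  have hq : ∀ i, (q i).IsHomogeneous 2 := fun i => (b i).2.2
  have hqI : ∀ i, q i ∈ I := fun i => (b i).2.1
  have hqli : LinearIndependent K q :=
    b.linearIndependent.map' (Submodule.subtype _) (Submodule.ker_subtype _)
  have hspan : I' ⊓ homogeneousSubmodule (Fin 3) K 2 = Submodule.span K (Set.range q) := by
    have := congrArg (Submodule.map (Submodule.subtype _)) b.span_eq
    rw [Submodule.map_span, ← Set.range_comp, Submodule.map_top, Submodule.range_subtype] at this
    exact this.symm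
  obtain ⟨l, m, hl, hm, hlm, hsyz⟩ : ∃ l m : MvPolynomial (Fin 3) K,
      l.IsHomogeneous 1 ∧ m.IsHomogeneous 1 ∧ (l, m) ≠ 0 ∧ l * q 0 + m * q 1 = 0 := by
    let V := homogeneousSubmodule (Fin 3) K 1
    let g : V × V →ₗ[K] MvPolynomial (Fin 3) K :=
      ((LinearMap.mulRight K (q 0)).domRestrict V).coprod
        ((LinearMap.mulRight K (q 1)).domRestrict V)
    let f : V × V →ₗ[K] (I' ⊓ homogeneousSubmodule (Fin 3) K 3 : Submodule K _) :=
      g.codRestrict _ fun v => by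
        refine ⟨I.add_mem (I.mul_mem_left _ (hqI 0)) (I.mul_mem_left _ (hqI 1)), ?_⟩
        exact ((show IsHomogeneous _ 1 from v.1.2).mul (hq 0)).add
          ((show IsHomogeneous _ 1 from v.2.2).mul (hq 1))
    have hker := f.ker_ne_bot_of_finrank_lt (by
      rw [Module.finrank_prod, finrank_homogeneousSubmodule,
        show Nat.multichoose 3 1 = 3 by simp]
      omega)
    obtain ⟨⟨l, m⟩, hv, hv0⟩ := Submodule.exists_mem_ne_zero_of_ne_bot hker
    refine ⟨l, m, l.2, m.2, by simpa [Prod.ext_iff] using hv0, ?_⟩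
    exact congrArg Subtype.val hv
  obtain ⟨x, hx, hq0, hq1⟩ := exists_common_linear_factor hq hqli hl hm hlm hsyz
  have hqeq : q = LinearMap.mulLeft K x ∘ ![-m, l] := by
    ext1 i
    fin_cases i
    · exact hq0
    · exact hq1
  have hli : LinearIndependent K ![-m, l] := LinearIndependent.of_comp _ (hqeq ▸ hqli)
  have hxI : x ∉ I := fun h => hqli.ne_zero 0 (by simp [hq0, hI1 x hx h])
  set D := Submodule.colon I (Ideal.span {x})
  have hzero := hAG.hilbFn_colon_eq_zero_iff hx hxI
  have hD1 : hilbFn D 1 ≤ 1 := by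
    have hle : Submodule.span K (Set.range ![-m, l]) ≤
        D.restrictScalars K ⊓ homogeneousSubmodule (Fin 3) K 1 := by
      rw [Submodule.span_le, Set.range_subset_iff]
      intro i
      fin_cases i
      · exact ⟨Ideal.mem_colon_span_singleton.mpr (by simpa [hq0, mul_comm] using hqI 0), hm.neg⟩
      · exact ⟨Ideal.mem_colon_span_singleton.mpr (by simpa [hq1, mul_comm] using hqI 1), hl⟩
    have hrank := Submodule.finrank_mono hle
    rw [finrank_span_eq_card hli, Fintype.card_fin] at hrank
    have := hilbFn_add_finrank_inf D 1
    rw [show Nat.multichoose 3 1 = 3 by simp] at this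
    omega
  have hj : 0 < socDeg I := by
    have := (hilbFn_eq_zero_iff_socDeg_lt hhom hne 1).not.mp (by omega)
    omega
  refine ⟨x, -m, l, hx, hm.neg, hl, hli, ?_, fun i hi => ?_, fun i hi => ?_⟩
  · rw [hspan, hqeq, Set.range_comp, Matrix.range_cons_cons_empty, Set.image_pair]
    rfl
  · exact le_antisymm (hilbFn_le_one hD1 i)
      (Nat.one_le_iff_ne_zero.mpr ((hzero i).not.mpr (by omega)))
  · exact (hzero i).mpr (by omega)
end
end
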